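/- Let φ(X) = X² + 4X ∈ ℚ[X]. Then for every n ≥ 2, the splitting field K_n of the n-fold iterate φ^{∘n} over ℚ satisfies [K_n : ℚ] = 2^(n−2). -/

import Mathlib

open Polynomial

/-- The `n`-fold iterate (composition) of a polynomial, with `iterComp p 0 = X`. -/
noncomputable def iterComp (p : ℚ[X]) : ℕ → ℚ[X]
  | 0 => X
  | n + 1 => p.comp (iterComp p n)

/-- The splitting field of a rational polynomial inside a fixed algebraic closure of `ℚ`:
the intermediate field generated by its set of roots. -/
noncomputable def splitFld (p : ℚ[X]) : IntermediateField ℚ (AlgebraicClosure ℚ) :=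
  IntermediateField.adjoin ℚ (p.rootSet (AlgebraicClosure ℚ))

/-!
The substitution `x = z + z⁻¹ - 2` semiconjugates `φ(x) = x² + 4x` to squaring, so the roots of
`φ^{∘n}` are the numbers `z + z⁻¹ - 2` with `z ^ 2 ^ n = 1`. Hence `K_n = ℚ(ζ + ζ⁻¹)` for a
primitive `2 ^ n`-th root of unity `ζ`. For `n ≥ 2` the conjugation `ζ ↦ ζ⁻¹` is non-trivial and
fixes `ζ + ζ⁻¹`, so this field has index `2` in `ℚ(ζ)`, which has degree `2 ^ (n - 1)`.
-/

open Module IntermediateField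

section AddInv

variable {K L : Type*} [Field K] [Field L]

theorem add_inv_eq_two_iff {u : K} (hu : u ≠ 0) : u + u⁻¹ = 2 ↔ u = 1 := by
  have hsq : u * (u + u⁻¹ - 2) = (u - 1) ^ 2 := by field_simp; ring
  rw [← sub_eq_zero, ← mul_eq_zero_iff_left hu, hsq, sq_eq_zero_iff, sub_eq_zero]

theorem exists_ne_zero_and_add_inv_eq [IsAlgClosed K] (y : K) : ∃ z : K, z ≠ 0 ∧ z + z⁻¹ = y := by
  obtain ⟨z, hz⟩ := IsAlgClosed.exists_root (C 1 * X ^ 2 + C (-y) * X + C 1)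
    (by rw [degree_quadratic one_ne_zero]; exact two_ne_zero)
  have hroot : z ^ 2 - y * z + 1 = 0 := by simpa [sub_eq_add_neg] using hz
  have hz0 : z ≠ 0 := by
    rintro rfl
    simp at hroot
  refine ⟨z, hz0, ?_⟩
  field_simp
  linear_combination hroot

variable [Algebra K L]

theorem pow_add_inv_pow_mem_adjoin_add_inv {z : L} (hz : z ≠ 0) (k : ℕ) :
    z ^ k + (z ^ k)⁻¹ ∈ K⟮z + z⁻¹⟯ := by
  have hdickson : aeval (z + z⁻¹) (dickson 1 (1 : K) k) = z ^ k + (z ^ k)⁻¹ := by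
    rw [← eval_map_algebraMap, map_dickson, map_one,
      dickson_one_one_eval_add_inv _ _ (mul_inv_cancel₀ hz), inv_pow]
  rw [← hdickson]
  exact algebra_adjoin_le_adjoin K _ (aeval_mem_adjoin_singleton K _)

theorem notMem_adjoin_add_inv_of_isConjRoot [Normal K L] {x : L} (hconj : IsConjRoot K x⁻¹ x)
    (hne : x⁻¹ ≠ x) : x ∉ K⟮x + x⁻¹⟯ := by
  obtain ⟨σ, hσ⟩ := hconj.exists_algEquiv
  have hfix : σ (x + x⁻¹) = x + x⁻¹ := by rw [map_add, map_inv₀, hσ, inv_inv, add_comm]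
  intro hx
  have hσx : σ x = x :=
    (forall_mem_adjoin_smul_eq_self_iff K σ).2 (by rintro _ rfl; exact hfix) x hx
  exact hne (hσ.symm.trans hσx)

theorem finrank_adjoin_over_adjoin_add_inv {x : L} (hx : x ∉ K⟮x + x⁻¹⟯) :
    finrank K⟮x + x⁻¹⟯ K⟮x + x⁻¹⟯⟮x⟯ = 2 := by
  have hx0 : x ≠ 0 := fun h ↦ hx (h ▸ zero_mem _)
  let p : K⟮x + x⁻¹⟯[X] := C 1 * X ^ 2 + C (-AdjoinSimple.gen K (x + x⁻¹)) * X + C 1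
  have hp : p.natDegree = 2 := natDegree_quadratic one_ne_zero
  have hpx : aeval x p = 0 := by
    simp only [map_one, one_mul, map_neg, neg_mul, map_add, map_pow, aeval_X, map_mul, aeval_C,
      IntermediateField.algebraMap_apply, AdjoinSimple.coe_gen, p]
    field_simp
    ring
  have hp0 : p ≠ 0 := ne_zero_of_natDegree_gt (hp ▸ two_pos)
  have hint : IsIntegral K⟮x + x⁻¹⟯ x := IsAlgebraic.isIntegral ⟨p, hp0, hpx⟩
  rw [adjoin.finrank hint]
  refine le_antisymm (hp ▸ natDegree_le_of_dvd (minpoly.dvd _ _ hpx) hp0) ?_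
  simpa [minpoly.two_le_natDegree_iff hint] using hx

theorem finrank_adjoin_add_inv_mul_two {x : L} (hx : x ∉ K⟮x + x⁻¹⟯) :
    finrank K K⟮x + x⁻¹⟯ * 2 = finrank K K⟮x⟯ := by
  have hle : K⟮x + x⁻¹⟯ ≤ K⟮x⟯ :=
    adjoin_simple_le_iff.2
      (add_mem (mem_adjoin_simple_self K x) (inv_mem (mem_adjoin_simple_self K x)))
  have htower : K⟮x + x⁻¹⟯⟮x⟯.restrictScalars K = K⟮x⟯ := by
    rw [restrictScalars_adjoin_eq_sup, sup_eq_right.2 hle]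
  calc finrank K K⟮x + x⁻¹⟯ * 2 = finrank K K⟮x + x⁻¹⟯ * finrank K⟮x + x⁻¹⟯ K⟮x + x⁻¹⟯⟮x⟯ := by
        rw [finrank_adjoin_over_adjoin_add_inv hx]
    _ = finrank K (K⟮x + x⁻¹⟯⟮x⟯.restrictScalars K) := finrank_mul_finrank K _ K⟮x + x⁻¹⟯⟮x⟯
    _ = finrank K K⟮x⟯ := by rw [htower]

theorem finrank_adjoin_primitiveRoot_add_inv_mul_two [Normal K L] {N : ℕ} [NeZero (N : K)]
    (hN : 2 < N) (hirr : Irreducible (cyclotomic N K)) {ζ : L} (hζ : IsPrimitiveRoot ζ N) :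
    finrank K K⟮ζ + ζ⁻¹⟯ * 2 = N.totient := by
  have hminpoly := hζ.minpoly_eq_cyclotomic_of_irreducible hirr
  have hconj : IsConjRoot K ζ⁻¹ ζ :=
    (hζ.inv.minpoly_eq_cyclotomic_of_irreducible hirr).symm.trans hminpoly
  have hne : ζ⁻¹ ≠ ζ := by
    intro h
    have hsq : ζ ^ 2 = 1 := by
      nth_rw 1 [sq, ← h]
      exact inv_mul_cancel₀ (hζ.ne_zero (by lia))
    exact hζ.pow_ne_one_of_pos_of_lt two_ne_zero hN hsq
  rw [finrank_adjoin_add_inv_mul_two (notMem_adjoin_add_inv_of_isConjRoot hconj hne),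
    adjoin.finrank (hζ.isIntegral (by lia)).tower_top, ← hminpoly, natDegree_cyclotomic]

end AddInv

theorem natDegree_iterComp (p : ℚ[X]) (n : ℕ) : (iterComp p n).natDegree = p.natDegree ^ n := by
  induction n with
  | zero => simp [iterComp]
  | succ n ih => rw [iterComp, natDegree_comp, ih, pow_succ']

theorem iterComp_ne_zero {p : ℚ[X]} (hp : p.natDegree ≠ 0) (n : ℕ) : iterComp p n ≠ 0 := by
  intro h
  have hdeg := natDegree_iterComp p n
  rw [h, natDegree_zero] at hdeg
  exact pow_ne_zero n hp hdeg.symm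

section Roots

variable {K : Type*} [Field K] [Algebra ℚ K]

theorem aeval_iterComp_sq_add_four_mul {z : K} (hz : z ≠ 0) (n : ℕ) :
    aeval (z + z⁻¹ - 2) (iterComp (X ^ 2 + C (4 : ℚ) * X) n) =
      z ^ 2 ^ n + (z ^ 2 ^ n)⁻¹ - 2 := by
  induction n with
  | zero => simp [iterComp]
  | succ n ih =>
    have hu : z ^ 2 ^ n ≠ 0 := pow_ne_zero _ hz
    rw [iterComp, aeval_comp, ih, pow_succ 2 n, pow_mul]
    simp only [map_add, map_pow, aeval_X, map_mul, aeval_C, eq_ratCast, Rat.cast_ofNat]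
    field_simp
    ring

theorem rootSet_iterComp_sq_add_four_mul [IsAlgClosed K] (n : ℕ) :
    (iterComp (X ^ 2 + C (4 : ℚ) * X) n).rootSet K =
      (fun z : K ↦ z + z⁻¹ - 2) '' {z | z ^ 2 ^ n = 1} := by
  have hdeg : (X ^ 2 + C (4 : ℚ) * X).natDegree = 2 := by compute_degree!
  have hroot {z : K} (hz : z ≠ 0) :
      z + z⁻¹ - 2 ∈ (iterComp (X ^ 2 + C (4 : ℚ) * X) n).rootSet K ↔ z ^ 2 ^ n = 1 := by
    rw [mem_rootSet_of_ne (iterComp_ne_zero (by rw [hdeg]; exact two_ne_zero) n),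
      aeval_iterComp_sq_add_four_mul hz, sub_eq_zero, add_inv_eq_two_iff (pow_ne_zero _ hz)]
  ext x
  constructor
  · intro hx
    obtain ⟨z, hz, hzx⟩ := exists_ne_zero_and_add_inv_eq (x + 2)
    obtain rfl : z + z⁻¹ - 2 = x := by rw [hzx, add_sub_cancel_right]
    exact ⟨z, (hroot hz).1 hx, rfl⟩
  · rintro ⟨z, hz, rfl⟩
    exact (hroot (ne_zero_pow (by positivity) (hz ▸ one_ne_zero))).2 hz

end Roots

-- Instance search finds the `ℚ`-algebra structure `DivisionRing.toRatAlgebra`, which is equal to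
-- `AlgebraicClosure.instAlgebra`, for which normality is an instance, but not reducibly so.
instance normal_rat_algebraicClosure : Normal ℚ (AlgebraicClosure ℚ) := by
  rw [Subsingleton.elim DivisionRing.toRatAlgebra (AlgebraicClosure.instAlgebra ℚ)]
  infer_instance

theorem splitFld_iterComp_sq_add_four_mul {n : ℕ} {ζ : AlgebraicClosure ℚ}
    (hζ : IsPrimitiveRoot ζ (2 ^ n)) :
    splitFld (iterComp (X ^ 2 + C (4 : ℚ) * X) n) = ℚ⟮ζ + ζ⁻¹⟯ := by
  rw [splitFld, rootSet_iterComp_sq_add_four_mul]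
  apply le_antisymm
  · rw [adjoin_le_iff]
    rintro _ ⟨z, hz, rfl⟩
    obtain ⟨i, -, rfl⟩ := hζ.eq_pow_of_pow_eq_one hz
    exact sub_mem (pow_add_inv_pow_mem_adjoin_add_inv (hζ.ne_zero (by positivity)) i)
      (ofNat_mem _ 2)
  · rw [adjoin_simple_le_iff, ← sub_add_cancel (ζ + ζ⁻¹) 2]
    exact add_mem (subset_adjoin ℚ _ ⟨ζ, hζ.pow_eq_one, rfl⟩) (ofNat_mem _ 2)

/-- with `φ(X) = X² + 4X`, for every `n ≥ 2` the splitting field `K_n` of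
`φ^{∘n}` over `ℚ` satisfies `[K_n : ℚ] = 2^(n−2)`. -/
theorem stmt_9 (n : ℕ) (hn : 2 ≤ n) :
    Module.finrank ℚ ↥(splitFld (iterComp (X ^ 2 + C (4 : ℚ) * X) n)) = 2 ^ (n - 2) := by
  obtain ⟨m, rfl⟩ := Nat.exists_eq_add_of_le' hn
  obtain ⟨ζ, hζ⟩ := HasEnoughRootsOfUnity.exists_primitiveRoot (AlgebraicClosure ℚ) (2 ^ (m + 2))
  have hlt : 2 < 2 ^ (m + 2) := by
    simpa using Nat.pow_lt_pow_right one_lt_two (show 1 < m + 2 by lia)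
  have hdegree := finrank_adjoin_primitiveRoot_add_inv_mul_two hlt
    (cyclotomic.irreducible_rat (by positivity)) hζ
  rw [Nat.totient_prime_pow_succ Nat.prime_two] at hdegree
  rw [splitFld_iterComp_sq_add_four_mul hζ]
  simpa [pow_succ] using hdegree
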